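/- arXiv:2212.03333 — 2 statements merged into one kernel-verified Lean document; each statement's English description precedes it below -/
import Mathlib

section
/- Let μ be an ordinal, let n ≥ 1 be a natural number, and let g be a function from n-tuples of ordinals below μ to ordinals below μ. Define T = {g(x̄) : x̄ ∈ μⁿ, max(x̄) < g(x̄)}. Then there is a regressive function f : T → μ (i.e., f(β) < β for every β ∈ T) such that for every ordinal η, the fiber f⁻¹({η}) has cardinality at most |η| + ℵ₀. -/
/-!
For each `β` in `T` choose a tuple `x` with `g x = β` and `max x < β`, and let `f β = max x`.
Then `f` is regressive. If `f β = η`, the chosen tuple lies in `(η + 1)ⁿ` and determines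
`β = g x`, so the fiber over `η` is contained in the `g`-image of `(η + 1)ⁿ`, which has cardinality
at most `(|η| + ℵ₀)ⁿ ≤ |η| + ℵ₀`.
-/

open Cardinal Set

/-- Let `g` map `n`-tuples of ordinals below `μ` to ordinals below `μ` (`n ≥ 1`)
and let `T = {g x̄ : x̄ ∈ μⁿ, max x̄ < g x̄}`. Then there is a regressive function
`f` on `T` all of whose fibers have cardinality at most `|η| + ℵ₀`. -/
theorem regressive_function_small_fibers
    (μ : Ordinal.{0}) (n : ℕ) (hn : 1 ≤ n)
    (g : (Fin n → Ordinal) → Ordinal)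
    (hg : ∀ x : Fin n → Ordinal, (∀ i, x i < μ) → g x < μ) :
    ∃ f : Ordinal → Ordinal,
      (∀ β ∈ g '' {x : Fin n → Ordinal | (∀ i, x i < μ) ∧ Finset.univ.sup x < g x},
        f β < β) ∧
      ∀ η : Ordinal,
        #{β : Ordinal |
            β ∈ g '' {x : Fin n → Ordinal | (∀ i, x i < μ) ∧ Finset.univ.sup x < g x} ∧
            f β = η}
          ≤ Cardinal.lift.{1} (η.card + ℵ₀) := by
  have key : ∀ β : Ordinal, ∃ x : Fin n → Ordinal,
      β ∈ g '' {x : Fin n → Ordinal | (∀ i, x i < μ) ∧ Finset.univ.sup x < g x} →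
        g x = β ∧ Finset.univ.sup x < β := by
    intro β
    by_cases h : β ∈ g '' {x : Fin n → Ordinal | (∀ i, x i < μ) ∧ Finset.univ.sup x < g x}
    · obtain ⟨x, ⟨-, hx⟩, rfl⟩ := h
      exact ⟨x, fun _ => ⟨rfl, hx⟩⟩
    · exact ⟨0, fun h' => absurd h' h⟩
  choose X hX using key
  refine ⟨fun β => Finset.univ.sup (X β), fun β hβ => (hX β hβ).2, fun η => ?_⟩
  have hsub : {β : Ordinal |
      β ∈ g '' {x : Fin n → Ordinal | (∀ i, x i < μ) ∧ Finset.univ.sup x < g x} ∧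
        Finset.univ.sup (X β) = η} ⊆
      range (fun y : Fin n → Iio (η + 1) => g fun i => (y i : Ordinal)) := by
    rintro β ⟨hβ, rfl⟩
    exact ⟨fun i => ⟨X β i,
      Order.lt_add_one_iff.2 (Finset.le_sup (f := X β) (Finset.mem_univ i))⟩,
      (hX β hβ).1⟩
  refine (mk_le_mk_of_subset hsub).trans (mk_range_le.trans ?_)
  have hinf : ℵ₀ ≤ η.card + ℵ₀ := self_le_add_left _ _
  have hsucc : (η + 1).card ≤ η.card + ℵ₀ := by
    rw [Ordinal.card_add_one]
    gcongr
    exact one_le_aleph0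
  have hpow : #(Fin n → Iio (η + 1)) = Cardinal.lift.{1} ((η + 1).card ^ n) := by
    rw [mk_arrow, Cardinal.mk_Iio_ordinal]
    rw [← power_natCast (η + 1).card, lift_power]
    simp only [mk_fin, lift_natCast, power_natCast, lift_uzero]
  rw [hpow, Cardinal.lift_le]
  exact (pow_le_pow_left₀ zero_le hsucc n).trans (power_nat_le hinf)
end

section
/- Let μ be an ordinal, let n ≥ 1 be a natural number, and let g be a function assigning to every n-tuple x̄ of ordinals below μ a nowhere stationary subset g(x̄) of μ. Then the set T̄ = ⋃ { g(x̄) ∖ (max(x̄)+1) : x̄ ∈ μⁿ } is nowhere stationary: for every regular uncountable cardinal ρ, the set T̄ ∩ ρ is non-stationary in ρ. -/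
/-!
The argument is the classical one showing that a diagonal union of non-stationary sets is
non-stationary, with tuples as indices. Fix a regular uncountable `κ`, and for each tuple `x` a club
`C x` in `κ` disjoint from `g x`. Their diagonal intersection, the set of `β < κ` which belong to
`C x` for every `x` with `max x < β`, is disjoint from the union of the `g x ∖ (max x + 1)`, so it
only remains to see that it is a club (`isClubIn_diagonal`). Closure is immediate. For
unboundedness, each `γ < κ` has a `δ < κ` such that `C x` meets the interval `(γ, δ)` for all tuples
`x` bounded by `γ`; this uses regularity and the fact that there are fewer than `κ` such tuples
(`exists_bound`). Iterating `γ ↦ δ` countably often and taking the supremum, which stays below `κ`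
because `κ` has uncountable cofinality, gives a point of the diagonal intersection.
-/

open Cardinal Set

/-- `C` is a club (closed unbounded) subset of the ordinal `ρ`: it consists of
ordinals below `ρ`, is unbounded in `ρ`, and contains all of its limit points
below `ρ`. -/
def IsClubIn (ρ : Ordinal) (C : Set Ordinal) : Prop :=
  C ⊆ Set.Iio ρ ∧ (∀ x < ρ, ∃ y ∈ C, x ≤ y) ∧
    ∀ x : Ordinal, 0 < x → x < ρ → (∀ y < x, ∃ z ∈ C, y < z ∧ z < x) → x ∈ C

/-- `S` is stationary in the ordinal `ρ`: it meets every club subset of `ρ`. -/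
def IsStationaryIn (ρ : Ordinal) (S : Set Ordinal) : Prop :=
  ∀ C : Set Ordinal, IsClubIn ρ C → (S ∩ C).Nonempty

/-- `T` is nowhere stationary: `T ∩ ρ` is non-stationary in `ρ` for every regular
uncountable cardinal `ρ`. -/
def NowhereStationary (T : Set Ordinal) : Prop :=
  ∀ ρ : Cardinal, ρ.IsRegular → ℵ₀ < ρ →
    ¬ IsStationaryIn ρ.ord (T ∩ Set.Iio ρ.ord)

universe u

/-- A function on `n`-tuples with values below a regular uncountable `κ` is bounded below `κ` on
the set of tuples bounded by a given `γ < κ`, as there are fewer than `κ` of these. -/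
theorem exists_bound {κ : Cardinal.{u}} (hκ : κ.IsRegular) (hκ' : ℵ₀ < κ) {n : ℕ}
    {γ : Ordinal.{u}} (hγ : γ < κ.ord) (F : (Fin n → Ordinal.{u}) → Ordinal.{u})
    (hF : ∀ x, F x < κ.ord) :
    ∃ δ < κ.ord, ∀ x : Fin n → Ordinal.{u}, (∀ i, x i ≤ γ) → F x < δ := by
  have hlim : Order.IsSuccLimit κ.ord := Cardinal.isSuccLimit_ord hκ'.le
  have hcard : #(Fin n → Set.Iio (Order.succ γ)) < Cardinal.lift.{u + 1} κ := by
    rw [Cardinal.mk_arrow, Cardinal.mk_Iio_ordinal, Cardinal.mk_fin, Cardinal.lift_natCast,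
      Cardinal.lift_uzero]
    refine Cardinal.power_nat_le_max.trans_lt (max_lt ?_ ?_)
    · rw [Cardinal.lift_lt, ← Cardinal.lt_ord]
      exact hlim.succ_lt hγ
    · rwa [← Cardinal.lift_aleph0.{u + 1, u}, Cardinal.lift_lt]
  let f : (Fin n → Set.Iio (Order.succ γ)) → Ordinal.{u} := fun x ↦ F fun i ↦ (x i).1
  refine ⟨⨆ x, f x + 1, ?_, fun x hx ↦ ?_⟩
  · refine Ordinal.lift_iSup_add_one_lt_of_lt_cof ?_ fun x ↦ hF _
    rwa [← Ordinal.lift_cof, hκ.cof_ord, Cardinal.lift_id'.{u, u + 1}]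
  · have h := Ordinal.le_iSup (fun x ↦ f x + 1) fun i ↦ ⟨x i, Order.lt_succ_of_le (hx i)⟩
    exact (Order.lt_add_one_iff.2 le_rfl).trans_le h

/-- Clubs in a regular uncountable cardinal, indexed by `n`-tuples of ordinals, have a club
diagonal intersection. -/
theorem isClubIn_diagonal {κ : Cardinal.{u}} (hκ : κ.IsRegular) (hκ' : ℵ₀ < κ) {n : ℕ}
    (C : (Fin n → Ordinal.{u}) → Set Ordinal.{u}) (hC : ∀ x, IsClubIn κ.ord (C x)) :
    IsClubIn κ.ord {β | β < κ.ord ∧ ∀ x, Finset.univ.sup x < β → β ∈ C x} := by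
  have hlim : Order.IsSuccLimit κ.ord := Cardinal.isSuccLimit_ord hκ'.le
  refine ⟨fun β hβ ↦ hβ.1, fun α hα ↦ ?_, fun β h0 hβ hlimit ↦ ⟨hβ, fun x hx ↦ ?_⟩⟩
  · have step : ∀ γ, ∃ δ, γ < κ.ord → δ < κ.ord ∧ γ < δ ∧
        ∀ x : Fin n → Ordinal.{u}, (∀ i, x i ≤ γ) → ∃ z ∈ C x, γ < z ∧ z < δ := by
      intro γ
      by_cases hγ : γ < κ.ord
      · choose F hFC hF using fun x ↦ (hC x).2.1 _ (hlim.succ_lt hγ)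
        obtain ⟨δ, hδ, hδF⟩ := exists_bound hκ hκ' hγ F fun x ↦ (hC x).1 (hFC x)
        exact ⟨max δ (Order.succ γ), fun _ ↦ ⟨max_lt hδ (hlim.succ_lt hγ),
          lt_max_of_lt_right (Order.lt_succ γ), fun x hx ↦
            ⟨F x, hFC x, Order.succ_le_iff.1 (hF x), lt_max_of_lt_left (hδF x hx)⟩⟩⟩
      · exact ⟨0, fun h ↦ absurd h hγ⟩
    choose H hH using step
    have hnfp : Ordinal.nfp H α < κ.ord :=
      Ordinal.nfp_lt_ord (by rwa [hκ.cof_ord]) (fun γ hγ ↦ (hH γ hγ).1) hα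
    have hiter : ∀ k, H^[k] α < κ.ord := fun k ↦ (Ordinal.iterate_le_nfp H α k).trans_lt hnfp
    refine ⟨Ordinal.nfp H α, ⟨hnfp, fun x hx ↦ ?_⟩, Ordinal.le_nfp H α⟩
    refine (hC x).2.2 _ (bot_le.trans_lt hx) hnfp fun y hy ↦ ?_
    obtain ⟨k, hk⟩ := Ordinal.lt_nfp_iff.1 (max_lt hx hy)
    obtain ⟨z, hz, hkz, hzH⟩ := (hH _ (hiter k)).2.2 x fun i ↦
      (Finset.le_sup (Finset.mem_univ i)).trans ((le_max_left _ _).trans hk.le)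
    refine ⟨z, hz, (le_max_right _ _).trans_lt (hk.trans hkz), hzH.trans_le ?_⟩
    rw [← Function.iterate_succ_apply' H k α]
    exact Ordinal.iterate_le_nfp H α (k + 1)
  · refine (hC x).2.2 β h0 hβ fun y hy ↦ ?_
    obtain ⟨z, hz, hlt, hzβ⟩ := hlimit _ (max_lt hx hy)
    exact ⟨z, hz.2 x ((le_max_left _ _).trans_lt hlt), (le_max_right _ _).trans_lt hlt, hzβ⟩

/-- If `g` assigns to every `n`-tuple `x̄` of ordinals below `μ` (`n ≥ 1`) a nowhere
stationary subset `g x̄` of `μ`, then `⋃ {g x̄ ∖ (max x̄ + 1) : x̄ ∈ μⁿ}` is nowhere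
stationary. -/
theorem union_of_nowhere_stationary_shifted
    (μ : Ordinal) (n : ℕ) (hn : 1 ≤ n)
    (g : (Fin n → Ordinal) → Set Ordinal)
    (hg : ∀ x : Fin n → Ordinal, (∀ i, x i < μ) →
      g x ⊆ Set.Iio μ ∧ NowhereStationary (g x)) :
    NowhereStationary
      (⋃ x ∈ {x : Fin n → Ordinal | ∀ i, x i < μ},
        {β ∈ g x | Finset.univ.sup x < β}) := by
  intro κ hκ hκ' hstat
  have hclub : ∀ x : Fin n → Ordinal, ∃ C, IsClubIn κ.ord C ∧
      ((∀ i, x i < μ) → ∀ β ∈ C, β ∉ g x) := by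
    intro x
    by_cases hx : ∀ i, x i < μ
    · have h := (hg x hx).2 κ hκ hκ'
      simp only [IsStationaryIn, not_forall, Set.not_nonempty_iff_eq_empty] at h
      obtain ⟨C, hC, hdisj⟩ := h
      exact ⟨C, hC, fun _ β hβ hβg ↦
        Set.eq_empty_iff_forall_notMem.1 hdisj β ⟨⟨hβg, hC.1 hβ⟩, hβ⟩⟩
    · exact ⟨Set.Iio κ.ord, ⟨subset_rfl, fun y hy ↦ ⟨y, hy, le_rfl⟩, fun _ _ h _ ↦ h⟩,
        fun h ↦ absurd h hx⟩
  choose C hC hdisj using hclub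
  obtain ⟨β, ⟨hβT, -⟩, -, hβC⟩ := hstat _ (isClubIn_diagonal hκ hκ' C hC)
  simp only [Set.mem_iUnion] at hβT
  obtain ⟨x, hx, hβg, hlt⟩ := hβT
  exact hdisj x hx β (hβC x hlt) hβg
end
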